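/- Define the linear map Φ_ast : ℂ[x,p] → End_ℂ(V) on the monomial basis by Φ_ast(p^m x^n) = F^{(m,n)}, and define the anti-standard star product on ℂ[x,p] by A ⋆_ast B = Σ_{k=0}^∞ ((iħ)^k/k!) · (∂_x^k A)·(∂_p^k B) (a finite sum for polynomials). Then for all polynomials A, B ∈ ℂ[x,p]: Φ_ast(A ⋆_ast B) = Φ_ast(A) ∘ Φ_ast(B). -/

import Mathlib

open Complex MvPolynomial Finset

noncomputable section

/-- The standard basis vector `e n` of `V = ℕ →₀ ℂ`. -/
def e (n : ℕ) : ℕ →₀ ℂ := Finsupp.single n 1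

/-- The destruction operator `a`: `a (e 0) = 0`, `a (e (n+1)) = √(n+1) • e n`. -/
def aop : (ℕ →₀ ℂ) →ₗ[ℂ] (ℕ →₀ ℂ) :=
  Finsupp.lsum ℂ fun n => match n with
    | 0 => 0
    | k + 1 => ((Real.sqrt (k + 1) : ℝ) : ℂ) • Finsupp.lsingle k

/-- The creation operator `a†`: `a† (e n) = √(n+1) • e (n+1)`. -/
def adop : (ℕ →₀ ℂ) →ₗ[ℂ] (ℕ →₀ ℂ) :=
  Finsupp.lsum ℂ fun n => ((Real.sqrt (n + 1) : ℝ) : ℂ) • Finsupp.lsingle (n + 1)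

/-- `F^{(m,n)} = (−iℏ·a)^m ∘ (a†)^n` as an element of `End_ℂ(V)`. -/
def F (ℏ : ℝ) (m n : ℕ) : Module.End ℂ (ℕ →₀ ℂ) :=
  ((-(Complex.I * ℏ)) • (aop : Module.End ℂ (ℕ →₀ ℂ))) ^ m * (adop : Module.End ℂ (ℕ →₀ ℂ)) ^ n

/-- The polynomial algebra ℂ[x,p] in two commuting variables. -/
abbrev Pxp := MvPolynomial (Fin 2) ℂ

/-- The variable `x`. -/
def xv : Pxp := X 0
/-- The variable `p`. -/
def pv : Pxp := X 1

/-- The partial derivative `∂_x` as a linear endomorphism. -/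
def Dx : Module.End ℂ Pxp := (pderiv (0 : Fin 2)).toLinearMap
/-- The partial derivative `∂_p` as a linear endomorphism. -/
def Dp : Module.End ℂ Pxp := (pderiv (1 : Fin 2)).toLinearMap

/-- The anti-standard star product `A ⋆_ast B = Σ_k ((iℏ)^k/k!) (∂_x^k A)(∂_p^k B)`
(a finite sum for polynomials). -/
def astStar (ℏ : ℝ) (A B : Pxp) : Pxp :=
  ∑ k ∈ Finset.range (A.totalDegree + 1),
    ((Complex.I * ℏ) ^ k / (k.factorial : ℂ)) • (((Dx ^ k) A) * ((Dp ^ k) B))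

/-! Write `x̂ = x + c ∂_p` for the twisted multiplication on `K[x, p]`. It commutes with
multiplication by `x` and satisfies `x̂ p = p x̂ + c`, the relation satisfied by `Q` and `P`, so the
ordering map `p ^ m * x ^ n ↦ P ^ m * Q ^ n` intertwines `x̂` with left multiplication by `Q`, just
as it intertwines `p` with left multiplication by `P`. Since multiplication by `x` and `∂_p`
commute, the binomial theorem gives `(p ^ m * x ^ n) ⋆ B = p ^ m * x̂ ^ n B`, which the ordering map
therefore sends to `P ^ m * Q ^ n` times the image of `B`. -/

section Derivation

variable {K S : Type*} [CommSemiring K] [CommSemiring S] [Algebra K S]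

lemma commute_mulLeft_derivation (D : Derivation K S S) {y : S} (hy : D y = 0) :
    Commute (LinearMap.mulLeft K y) (D : Module.End K S) := by
  ext a
  simp [hy]

lemma derivation_pow_apply_mul_of_eq_zero (D : Derivation K S S) {y : S} (hy : D y = 0) (k : ℕ)
    (a : S) : ((D : Module.End K S) ^ k) (y * a) = y * ((D : Module.End K S) ^ k) a :=
  (LinearMap.congr_fun ((commute_mulLeft_derivation D hy).pow_right k).eq a).symm

lemma derivation_pow_apply_pow_of_eq_one (D : Derivation K S S) {y : S} (hy : D y = 1) (k n : ℕ) :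
    ((D : Module.End K S) ^ k) (y ^ n) = n.descFactorial k • y ^ (n - k) := by
  induction k with
  | zero => simp
  | succ k ih =>
    rw [pow_succ', Module.End.mul_apply, ih, map_nsmul, Derivation.coeFn_coe,
      Derivation.leibniz_pow, hy, smul_eq_mul, mul_one, smul_smul, Nat.descFactorial_succ,
      mul_comm (n - k), Nat.sub_sub]

end Derivation

lemma linearMap_apply_eq_of_forall_mem_support {K σ M : Type*} [CommSemiring K] [AddCommMonoid M]
    [Module K M] {f g : MvPolynomial σ K →ₗ[K] M} {A : MvPolynomial σ K}
    (h : ∀ s ∈ A.support, f (monomial s 1) = g (monomial s 1)) : f A = g A := by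
  rw [A.as_sum, map_sum, map_sum]
  refine Finset.sum_congr rfl fun s hs => ?_
  rw [← mul_one (coeff s A), ← smul_eq_mul, ← smul_monomial, map_smul, map_smul, h s hs]

lemma monomial_fin_two_eq {K : Type*} [CommSemiring K] (s : Fin 2 →₀ ℕ) :
    monomial s (1 : K) = X 1 ^ s 1 * X 0 ^ s 0 := by
  rw [monomial_eq, Finsupp.prod_fintype _ _ fun _ => pow_zero _, Fin.prod_univ_two, C_1, one_mul,
    mul_comm]

section TwistedMul

variable {K : Type*} [CommSemiring K]

/-- The operator `x̂ = x + c ∂_p` on `K[x, p]`, with `x = X 0` and `p = X 1`. It is star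
multiplication by `x` from the left. -/
def twistedMulX (c : K) : Module.End K (MvPolynomial (Fin 2) K) :=
  LinearMap.mulLeft K (X 0) + c • (pderiv (1 : Fin 2)).toLinearMap

lemma twistedMulX_apply (c : K) (A : MvPolynomial (Fin 2) K) :
    twistedMulX c A = X 0 * A + c • pderiv 1 A := rfl

lemma twistedMulX_X_zero_mul (c : K) (A : MvPolynomial (Fin 2) K) :
    twistedMulX c (X 0 * A) = X 0 * twistedMulX c A := by
  simp [twistedMulX_apply, mul_add]

lemma twistedMulX_X_one_mul (c : K) (A : MvPolynomial (Fin 2) K) :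
    twistedMulX c (X 1 * A) = X 1 * twistedMulX c A + c • A := by
  simp only [twistedMulX_apply, pderiv_mul, pderiv_X_self, one_mul, smul_add, mul_add,
    mul_smul_comm]
  rw [mul_left_comm (X 0), add_assoc, add_comm (c • A)]

lemma twistedMulX_pow_apply (c : K) (n : ℕ) (B : MvPolynomial (Fin 2) K) :
    (twistedMulX c ^ n) B = ∑ k ∈ range (n + 1),
      (n.choose k * c ^ k) • (X 0 ^ (n - k) * ((pderiv (1 : Fin 2)).toLinearMap ^ k) B) := by
  have hcomm : Commute (c • (pderiv (1 : Fin 2)).toLinearMap)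
      (LinearMap.mulLeft K (X 0 : MvPolynomial (Fin 2) K)) :=
    ((commute_mulLeft_derivation _ (pderiv_X_of_ne zero_ne_one)).smul_right c).symm
  rw [twistedMulX, add_comm, hcomm.add_pow, LinearMap.sum_apply]
  refine Finset.sum_congr rfl fun k _ => ?_
  rw [(hcomm.pow_pow k (n - k)).eq, ← Nat.cast_comm, ← nsmul_eq_mul, smul_pow, mul_smul_comm,
    LinearMap.pow_mulLeft, LinearMap.smul_apply, LinearMap.smul_apply, mul_smul,
    Nat.cast_smul_eq_nsmul]
  rfl

end TwistedMul

section OrderingMap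

variable {K R : Type*} [CommSemiring K] [Semiring R] [Algebra K R]
  {Φ : MvPolynomial (Fin 2) K →ₗ[K] R} {P Q : R}

lemma orderingMap_X_one_pow_mul (hΦ : ∀ m n : ℕ, Φ (X 1 ^ m * X 0 ^ n) = P ^ m * Q ^ n) (m : ℕ)
    (A : MvPolynomial (Fin 2) K) : Φ (X 1 ^ m * A) = P ^ m * Φ A := by
  refine linearMap_apply_eq_of_forall_mem_support (f := Φ ∘ₗ LinearMap.mulLeft K (X 1 ^ m))
    (g := LinearMap.mulLeft K (P ^ m) ∘ₗ Φ) fun s _ => ?_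
  simp only [LinearMap.comp_apply, LinearMap.mulLeft_apply, monomial_fin_two_eq, hΦ, ← mul_assoc,
    ← pow_add]

lemma orderingMap_X_zero_mul (hΦ : ∀ m n : ℕ, Φ (X 1 ^ m * X 0 ^ n) = P ^ m * Q ^ n)
    (A : MvPolynomial (Fin 2) K) : Φ (X 0 * A) = Φ A * Q := by
  refine linearMap_apply_eq_of_forall_mem_support (f := Φ ∘ₗ LinearMap.mulLeft K (X 0))
    (g := LinearMap.mulRight K Q ∘ₗ Φ) fun s _ => ?_
  rw [LinearMap.comp_apply, LinearMap.comp_apply, LinearMap.mulLeft_apply,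
    LinearMap.mulRight_apply, monomial_fin_two_eq, mul_left_comm, ← pow_succ', hΦ, hΦ, mul_assoc,
    ← pow_succ]

lemma orderingMap_twistedMulX {c : K} (hQP : Q * P = P * Q + algebraMap K R c)
    (hΦ : ∀ m n : ℕ, Φ (X 1 ^ m * X 0 ^ n) = P ^ m * Q ^ n) (A : MvPolynomial (Fin 2) K) :
    Φ (twistedMulX c A) = Q * Φ A := by
  have hp (A) : Φ (X 1 * A) = P * Φ A := by simpa using orderingMap_X_one_pow_mul hΦ 1 A
  induction A using MvPolynomial.induction_on with
  | C z =>
    have h_one : Φ 1 = 1 := by simpa using hΦ 0 0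
    rw [← mul_one (C z), ← smul_eq_C_mul, map_smul, map_smul, map_smul, mul_smul_comm,
      twistedMulX_apply, pderiv_one, smul_zero, add_zero, orderingMap_X_zero_mul hΦ, h_one,
      one_mul, mul_one]
  | add A B hA hB => rw [map_add, map_add, map_add, hA, hB, mul_add]
  | mul_X A i hA =>
    rw [mul_comm]
    fin_cases i
    · change Φ (twistedMulX c (X 0 * A)) = Q * Φ (X 0 * A)
      rw [twistedMulX_X_zero_mul, orderingMap_X_zero_mul hΦ, hA, orderingMap_X_zero_mul hΦ,
        mul_assoc]
    · change Φ (twistedMulX c (X 1 * A)) = Q * Φ (X 1 * A)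
      calc Φ (twistedMulX c (X 1 * A)) = P * Q * Φ A + algebraMap K R c * Φ A := by
            rw [twistedMulX_X_one_mul, map_add, map_smul, hp, hA, mul_assoc, Algebra.smul_def]
        _ = Q * Φ (X 1 * A) := by rw [← add_mul, ← hQP, hp, mul_assoc]

lemma orderingMap_twistedMulX_pow {c : K} (hQP : Q * P = P * Q + algebraMap K R c)
    (hΦ : ∀ m n : ℕ, Φ (X 1 ^ m * X 0 ^ n) = P ^ m * Q ^ n) (n : ℕ)
    (A : MvPolynomial (Fin 2) K) : Φ ((twistedMulX c ^ n) A) = Q ^ n * Φ A := by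
  induction n with
  | zero => simp
  | succ n ih =>
    rw [pow_succ', Module.End.mul_apply, orderingMap_twistedMulX hQP hΦ, ih, pow_succ', mul_assoc]

end OrderingMap

section StarProduct

variable {K : Type*} [Field K]

/-- The linear map `A ↦ ∑_{k < N} (c ^ k / k!) (∂_x ^ k A) (∂_p ^ k B)` on `K[x, p]`, with `x = X 0`
and `p = X 1`: the anti-standard star product with parameter `c`, cut off at order `N`. A cutoff
that does not depend on `A` makes it linear in `A`. -/
def truncatedStarRight (c : K) (N : ℕ) (B : MvPolynomial (Fin 2) K) :
    Module.End K (MvPolynomial (Fin 2) K) :=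
  ∑ k ∈ range N, (c ^ k / (k.factorial : K)) •
    (LinearMap.mulRight K (((pderiv (1 : Fin 2)).toLinearMap ^ k) B) ∘ₗ
      (pderiv (0 : Fin 2)).toLinearMap ^ k)

lemma truncatedStarRight_apply (c : K) (N : ℕ) (A B : MvPolynomial (Fin 2) K) :
    truncatedStarRight c N B A = ∑ k ∈ range N, (c ^ k / (k.factorial : K)) •
      (((pderiv (0 : Fin 2)).toLinearMap ^ k) A * ((pderiv (1 : Fin 2)).toLinearMap ^ k) B) := by
  simp [truncatedStarRight]

variable [CharZero K]

lemma div_factorial_mul_descFactorial (c : K) (n k : ℕ) :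
    c ^ k / (k.factorial : K) * (n.descFactorial k : K) = n.choose k * c ^ k := by
  have hk : (k.factorial : K) ≠ 0 := mod_cast k.factorial_ne_zero
  rw [Nat.descFactorial_eq_factorial_mul_choose, Nat.cast_mul]
  field_simp

lemma truncatedStarRight_X_pow_mul_X_pow (c : K) {N n : ℕ} (hn : n < N) (m : ℕ)
    (B : MvPolynomial (Fin 2) K) :
    truncatedStarRight c N B (X 1 ^ m * X 0 ^ n) = X 1 ^ m * (twistedMulX c ^ n) B := by
  have hp : pderiv (0 : Fin 2) (X 1 ^ m : MvPolynomial (Fin 2) K) = 0 := by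
    simp
  have hterm (k : ℕ) : (c ^ k / (k.factorial : K)) •
      (((pderiv (0 : Fin 2)).toLinearMap ^ k) (X 1 ^ m * X 0 ^ n) *
        ((pderiv (1 : Fin 2)).toLinearMap ^ k) B) =
      X 1 ^ m * (n.choose k * c ^ k) •
        (X 0 ^ (n - k) * ((pderiv (1 : Fin 2)).toLinearMap ^ k) B) := by
    rw [derivation_pow_apply_mul_of_eq_zero _ hp,
      derivation_pow_apply_pow_of_eq_one _ (pderiv_X_self 0), ← Nat.cast_smul_eq_nsmul K,
      mul_assoc, smul_mul_assoc, mul_smul_comm, smul_smul, div_factorial_mul_descFactorial,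
      mul_smul_comm]
  rw [truncatedStarRight_apply, twistedMulX_pow_apply, Finset.mul_sum]
  simp only [hterm]
  refine (Finset.sum_subset (range_mono hn) fun k _ hk => ?_).symm
  rw [Nat.choose_eq_zero_of_lt (by simpa using hk), Nat.cast_zero, zero_mul, zero_smul, mul_zero]

theorem stmt15_general {R : Type*} [Semiring R] [Algebra K R] {c : K} {P Q : R}
    (hQP : Q * P = P * Q + algebraMap K R c) {Φ : MvPolynomial (Fin 2) K →ₗ[K] R}
    (hΦ : ∀ m n : ℕ, Φ (X 1 ^ m * X 0 ^ n) = P ^ m * Q ^ n) {A : MvPolynomial (Fin 2) K} {N : ℕ}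
    (hN : A.degreeOf 0 < N) (B : MvPolynomial (Fin 2) K) :
    Φ (∑ k ∈ range N, (c ^ k / (k.factorial : K)) •
      (((pderiv (0 : Fin 2)).toLinearMap ^ k) A * ((pderiv (1 : Fin 2)).toLinearMap ^ k) B)) =
      Φ A * Φ B := by
  rw [← truncatedStarRight_apply]
  refine linearMap_apply_eq_of_forall_mem_support (f := Φ ∘ₗ truncatedStarRight c N B)
    (g := LinearMap.mulRight K (Φ B) ∘ₗ Φ) fun s hs => ?_
  have hsN : s 0 < N := (monomial_le_degreeOf 0 hs).trans_lt hN
  rw [LinearMap.comp_apply, LinearMap.comp_apply, LinearMap.mulRight_apply, monomial_fin_two_eq,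
    truncatedStarRight_X_pow_mul_X_pow c hsN, orderingMap_X_one_pow_mul hΦ,
    orderingMap_twistedMulX_pow hQP hΦ, hΦ, mul_assoc]

end StarProduct

section LadderOperators

lemma aop_e_zero : aop (e 0) = 0 := by
  simp [aop, e]

lemma aop_e_succ (n : ℕ) : aop (e (n + 1)) = ((Real.sqrt (n + 1) : ℝ) : ℂ) • e n := by
  simp [aop, e]

lemma adop_e (n : ℕ) : adop (e n) = ((Real.sqrt (n + 1) : ℝ) : ℂ) • e (n + 1) := by
  simp [adop, e]

lemma ofReal_sqrt_mul_self_succ (n : ℕ) :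
    ((Real.sqrt (n + 1) : ℝ) : ℂ) * ((Real.sqrt (n + 1) : ℝ) : ℂ) = n + 1 := by
  rw [← ofReal_mul, Real.mul_self_sqrt (by positivity)]
  push_cast
  rfl

lemma aop_adop_e (n : ℕ) : aop (adop (e n)) = (n + 1 : ℂ) • e n := by
  rw [adop_e, map_smul, aop_e_succ, smul_smul, ofReal_sqrt_mul_self_succ]

lemma adop_aop_e (n : ℕ) : adop (aop (e n)) = (n : ℂ) • e n := by
  cases n with
  | zero => simp [aop_e_zero]
  | succ n =>
    rw [aop_e_succ, map_smul, adop_e, smul_smul, ofReal_sqrt_mul_self_succ, Nat.cast_succ]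

lemma aop_mul_adop : (aop * adop : Module.End ℂ (ℕ →₀ ℂ)) = adop * aop + 1 := by
  refine Finsupp.lhom_ext' fun n => LinearMap.ext_ring ?_
  change aop (adop (e n)) = adop (aop (e n)) + e n
  rw [aop_adop_e, adop_aop_e, add_smul, one_smul]

lemma adop_mul_neg_smul_aop (c : ℂ) :
    (adop * (-c) • aop : Module.End ℂ (ℕ →₀ ℂ)) =
      (-c) • aop * adop + algebraMap ℂ (Module.End ℂ (ℕ →₀ ℂ)) c := by
  rw [smul_mul_assoc, aop_mul_adop, mul_smul_comm, Algebra.algebraMap_eq_smul_one]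
  module

end LadderOperators

/-- the anti-standard ordering map `Φ_ast(p^m x^n) = F^{(m,n)}` is a
homomorphism for the anti-standard star product: `Φ_ast(A ⋆_ast B) = Φ_ast(A) ∘ Φ_ast(B)`. -/
theorem stmt15 (ℏ : ℝ) (hℏ : ℏ ≠ 0)
    (Φ : Pxp →ₗ[ℂ] Module.End ℂ (ℕ →₀ ℂ))
    (hΦ : ∀ m n : ℕ, Φ (pv ^ m * xv ^ n) = F ℏ m n) :
    ∀ A B : Pxp, Φ (astStar ℏ A B) = Φ A * Φ B :=
  fun A B => stmt15_general (adop_mul_neg_smul_aop (I * ℏ)) hΦ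
    (Nat.lt_succ_of_le (degreeOf_le_totalDegree A 0)) B

end
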